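/- arXiv:1803.11324 — 7 statements merged into one kernel-verified Lean document; each statement's English description precedes it below -/
import Mathlib

section
/- Define g : ℝ → ℝ by g(θ) = 1 + √(2 − 2cos θ) + √(2 − 2cos θ + 2√(2 − 2cos θ)). Then g is twice differentiable at θ = π and g''(π) = −1/2 − 3√2/8. -/
/-!
Wherever `cos θ < 1` both radicands are positive, and the chain rule gives
`g'(θ) = sin θ * k(θ)` with `k = 1/√u + (1 + 1/√u)/√(u + 2√u)` and `u = 2 - 2 cos θ`.
The factor `k` is differentiable at `π` and `sin π = 0`, so `g''(π) = cos π * k(π) = -k(π)`: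
the derivative of `k` itself is never needed. At `π`, `u = 4`, hence `√u = 2`, `√(u + 2√u) = 2√2`.
-/

/-- `g(θ) = |ζ(e^{iθ})| = 1 + √(2-2cos θ) + √(2-2cos θ + 2√(2-2cos θ))`. -/
noncomputable def absZeta (θ : ℝ) : ℝ :=
  1 + Real.sqrt (2 - 2 * Real.cos θ) +
    Real.sqrt (2 - 2 * Real.cos θ + 2 * Real.sqrt (2 - 2 * Real.cos θ))

/-- The factor `k` in `g'(θ) = sin θ * k(θ)`. -/
noncomputable def absZetaCofactor (θ : ℝ) : ℝ :=
  1 / Real.sqrt (2 - 2 * Real.cos θ) +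
    (1 + 1 / Real.sqrt (2 - 2 * Real.cos θ)) /
      Real.sqrt (2 - 2 * Real.cos θ + 2 * Real.sqrt (2 - 2 * Real.cos θ))

lemma hasDerivAt_absZeta {θ : ℝ} (h : Real.cos θ < 1) :
    HasDerivAt absZeta (Real.sin θ * absZetaCofactor θ) θ := by
  have hu : 0 < 2 - 2 * Real.cos θ := by linarith
  have hs := Real.sqrt_pos.2 hu
  have hv : 0 < 2 - 2 * Real.cos θ + 2 * Real.sqrt (2 - 2 * Real.cos θ) := by positivity
  have hw := Real.sqrt_pos.2 hv
  have d1 : HasDerivAt (fun x => 2 - 2 * Real.cos x) (2 * Real.sin θ) θ := by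
    simpa using ((Real.hasDerivAt_cos θ).const_mul 2).const_sub 2
  have d2 := d1.sqrt hu.ne'
  have d3 := (d1.fun_add (d2.const_mul 2)).sqrt hv.ne'
  have d4 := (d2.const_add 1).fun_add d3
  unfold absZeta
  refine d4.congr_deriv ?_
  rw [absZetaCofactor]
  field_simp

lemma differentiableAt_absZetaCofactor {θ : ℝ} (h : Real.cos θ < 1) :
    DifferentiableAt ℝ absZetaCofactor θ := by
  have hu : 0 < 2 - 2 * Real.cos θ := by linarith
  have hs := Real.sqrt_pos.2 hu
  have hv : 0 < 2 - 2 * Real.cos θ + 2 * Real.sqrt (2 - 2 * Real.cos θ) := by positivity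
  have hw := Real.sqrt_pos.2 hv
  have d1 : DifferentiableAt ℝ (fun x => 2 - 2 * Real.cos x) θ := by fun_prop
  have d2 := d1.sqrt hu.ne'
  have d3 := (d1.fun_add (d2.const_mul 2)).sqrt hv.ne'
  have d4 := (differentiableAt_const (1 : ℝ)).div d2 hs.ne'
  exact d4.add ((d4.const_add 1).div d3 hw.ne')

lemma absZetaCofactor_pi : absZetaCofactor Real.pi = 1 / 2 + 3 * Real.sqrt 2 / 8 := by
  have h4 : Real.sqrt 4 = 2 := by
    rw [show (4 : ℝ) = 2 ^ 2 by norm_num]; exact Real.sqrt_sq (by norm_num)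
  have h8 : Real.sqrt 8 = 2 * Real.sqrt 2 := by
    rw [show (8 : ℝ) = 2 ^ 2 * 2 by norm_num, Real.sqrt_mul (by norm_num),
      Real.sqrt_sq (by norm_num)]
  have e : (2 : ℝ) - 2 * Real.cos Real.pi = 4 := by rw [Real.cos_pi]; norm_num
  have h2 : Real.sqrt 2 ^ 2 = 2 := Real.sq_sqrt (by norm_num)
  have hp : 0 < Real.sqrt 2 := by positivity
  rw [absZetaCofactor, e, h4, show (4 : ℝ) + 2 * 2 = 8 by norm_num, h8]
  field_simp
  linarith

/-- `g` is twice differentiable at `θ = π` and `g''(π) = -1/2 - 3√2/8`. -/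
theorem second_deriv_absZeta_at_pi :
    (∀ᶠ θ in nhds Real.pi, DifferentiableAt ℝ absZeta θ) ∧
    DifferentiableAt ℝ (deriv absZeta) Real.pi ∧
    deriv (deriv absZeta) Real.pi = -1 / 2 - 3 * Real.sqrt 2 / 8 := by
  have hπ : Real.cos Real.pi < 1 := by rw [Real.cos_pi]; norm_num
  have hev : ∀ᶠ θ in nhds Real.pi, Real.cos θ < 1 :=
    Real.continuous_cos.continuousAt.eventually_lt continuousAt_const hπ
  have heq : deriv absZeta =ᶠ[nhds Real.pi] fun θ => Real.sin θ * absZetaCofactor θ :=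
    hev.mono fun θ h => (hasDerivAt_absZeta h).deriv
  have key : HasDerivAt (deriv absZeta) (-1 / 2 - 3 * Real.sqrt 2 / 8) Real.pi := by
    refine HasDerivAt.congr_of_eventuallyEq ?_ heq
    refine ((Real.hasDerivAt_sin Real.pi).mul
      (differentiableAt_absZetaCofactor hπ).hasDerivAt).congr_deriv ?_
    rw [Real.sin_pi, Real.cos_pi, absZetaCofactor_pi]
    ring
  exact ⟨hev.mono fun θ h => (hasDerivAt_absZeta h).differentiableAt,
    key.differentiableAt, key.deriv⟩
end

section
/- Let α > -1, β > -1, and set η = (1+√2)². Then (1/4π) ∫_{−π}^{π} ln( |cos(t/2)|^{2α} |sin(t/2)|^{2β} |sin t| ) · (1 − η²)/(1 − 2η cos(π − t) + η²) dt = ln( 2^{−3/4} · (1 + √2)^{α+1} · (1 + 1/√2)^{β} ). -/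
/-!
The logarithm of the weight is, off a null set, a combination of `log |z + 1|`, `log |z - 1|` and
`log 2` at `z = e^{it}`, and the kernel at the exterior point `-η` is minus the Poisson kernel at
the reflected interior point `-1/η`. So the integral is evaluated by Poisson's formula for
`log |z - a|` with `|a| = 1` (`circleAverage_poissonKernel_log_norm_sub`), obtained by moving the
singularity `a` out of the closed disk and passing to the limit by dominated convergence. At
`z = -1/η = 2√2 - 3` the values are `|z + 1| = 2(√2 - 1)` and `|z - 1| = 2(2 - √2)`, and the
identity becomes one between `log √2` and `log (1 + √2)`.
-/


/-- `η = (1+√2)² = |ζ(-1)|`. -/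
noncomputable def eta : ℝ := (1 + Real.sqrt 2) ^ 2

open MeasureTheory Filter Topology Complex Metric in
/-- Poisson's formula for `log ‖· - a‖` with `a` on the boundary circle. It follows by dominated
convergence from the formula for `log ‖· - s a‖`, `s ↓ 1`, which is harmonic on a neighbourhood
of the closed disk. -/
lemma circleAverage_poissonKernel_log_norm_sub {w a : ℂ} (hw : ‖w‖ < 1) (ha : ‖a‖ = 1) :
    Real.circleAverage (poissonKernel 0 w • fun z : ℂ ↦ Real.log ‖z - a‖) 0 1 =
      Real.log ‖w - a‖ := by
  have hw' : w ∈ ball (0 : ℂ) 1 := by simpa using hw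
  have hKcont : Continuous fun θ : ℝ ↦ poissonKernel 0 w (circleMap 0 1 θ) := by
    unfold poissonKernel
    refine Continuous.div (by fun_prop) (by fun_prop) fun θ ↦ ?_
    have : circleMap 0 1 θ - 0 - (w - 0) ≠ 0 := by
      intro h
      have h2 : circleMap 0 1 θ = w := by simpa [sub_eq_zero] using h
      have h3 : ‖circleMap 0 1 θ‖ = 1 := by simp
      rw [h2] at h3
      linarith
    exact pow_ne_zero _ (norm_ne_zero_iff.2 this)
  have hPoisson : ∀ s : ℝ, 1 < s →
      Real.circleAverage (poissonKernel 0 w • fun z : ℂ ↦ Real.log ‖z - s * a‖) 0 1 =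
        Real.log ‖w - s * a‖ := by
    intro s hs
    refine InnerProductSpace.HarmonicOnNhd.circleAverage_poissonKernel_smul
      (f := fun z : ℂ ↦ Real.log ‖z - s * a‖) (fun z hz ↦ ?_) hw'
    refine AnalyticAt.harmonicAt_log_norm (f := fun z : ℂ ↦ z - s * a) (by fun_prop) ?_
    intro h
    have h1 : z = s * a := sub_eq_zero.1 h
    have h2 : ‖z‖ ≤ 1 := by simpa using hz
    rw [h1, norm_mul, ha, norm_real, Real.norm_of_nonneg (by linarith)] at h2
    linarith
  have hne : ∀ᵐ θ : ℝ, circleMap 0 1 θ ≠ a := by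
    have : ((circleMap 0 1) ⁻¹' {a}).Countable :=
      Set.Countable.preimage_circleMap (Set.countable_singleton a) 0 one_ne_zero
    filter_upwards [this.ae_notMem volume] with θ hθ h using hθ h
  have hlim : Tendsto
      (fun s : ℝ ↦ Real.circleAverage (poissonKernel 0 w • fun z : ℂ ↦ Real.log ‖z - s * a‖) 0 1)
      (𝓝[>] 1)
      (𝓝 (Real.circleAverage (poissonKernel 0 w • fun z : ℂ ↦ Real.log ‖z - a‖) 0 1)) := by
    simp only [Real.circleAverage_def]
    refine Tendsto.const_smul ?_ _
    refine intervalIntegral.tendsto_integral_filter_of_dominated_convergence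
      (fun θ ↦ |poissonKernel 0 w (circleMap 0 1 θ)| *
        (Real.log 3 + Real.log 2 + |Real.log ‖circleMap 0 1 θ - a‖|)) ?_ ?_ ?_ ?_
    · refine Eventually.of_forall fun s ↦ ?_
      refine (hKcont.measurable.mul (Real.measurable_log.comp ?_)).aestronglyMeasurable
      exact Continuous.measurable (by fun_prop)
    · filter_upwards [Ioc_mem_nhdsGT (show (1 : ℝ) < 2 by norm_num)] with s hs
      filter_upwards [hne] with θ hθ _
      set z := circleMap 0 1 θ
      have hz : ‖z‖ = 1 := by simp [z]
      have hsa : ‖(s : ℂ) * a‖ = s := by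
        rw [norm_mul, ha, norm_real, Real.norm_of_nonneg (by linarith [hs.1]), mul_one]
      have hpos : 0 < ‖z - a‖ := norm_pos_iff.2 (sub_ne_zero.2 hθ)
      have h1 : s - 1 ≤ ‖z - s * a‖ := by
        have := norm_sub_norm_le ((s : ℂ) * a) z
        rw [norm_sub_rev, hsa, hz] at this
        exact this
      have h2 : ‖z - a‖ ≤ ‖z - s * a‖ + (s - 1) := by
        have h3 : z - a = (z - s * a) + ((s - 1 : ℝ) : ℂ) * a := by push_cast; ring
        have h4 : ‖((s - 1 : ℝ) : ℂ) * a‖ = s - 1 := by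
          rw [norm_mul, ha, norm_real, Real.norm_of_nonneg (by linarith [hs.1]), mul_one]
        rw [h3]
        exact (norm_add_le _ _).trans (by rw [h4])
      have h5 : ‖z - s * a‖ ≤ 3 := by
        have := norm_sub_le z ((s : ℂ) * a)
        rw [hsa, hz] at this
        linarith [hs.2]
      have hpos' : 0 < ‖z - s * a‖ := by linarith [hs.1]
      have hu : Real.log ‖z - s * a‖ ≤ Real.log 3 := Real.log_le_log hpos' h5
      have hl : Real.log ‖z - a‖ ≤ Real.log 2 + Real.log ‖z - s * a‖ := by
        rw [← Real.log_mul two_ne_zero hpos'.ne']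
        exact Real.log_le_log hpos (by linarith)
      have l2 : 0 < Real.log 2 := Real.log_pos (by norm_num)
      have l3 : 0 < Real.log 3 := Real.log_pos (by norm_num)
      simp only [Pi.smul_apply', smul_eq_mul, norm_mul, Real.norm_eq_abs]
      gcongr
      rw [abs_le]
      constructor
      · linarith [neg_abs_le (Real.log ‖z - a‖)]
      · linarith [abs_nonneg (Real.log ‖z - a‖)]
    · refine IntervalIntegrable.continuousOn_mul ?_ hKcont.abs.continuousOn
      refine intervalIntegrable_const.add ?_
      exact IntervalIntegrable.abs (circleIntegrable_log_norm_sub_const (c := 0) (a := a) 1)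
    · filter_upwards [hne] with θ hθ _
      simp only [Pi.smul_apply', smul_eq_mul]
      refine Tendsto.const_mul _ ?_
      refine Tendsto.mono_left ?_ nhdsWithin_le_nhds
      have : ContinuousAt (fun s : ℝ ↦ Real.log ‖circleMap 0 1 θ - s * a‖) 1 := by
        refine ContinuousAt.log (by fun_prop) ?_
        simpa [sub_eq_zero] using hθ
      simpa [ContinuousAt] using this
  have hlim' : Tendsto (fun s : ℝ ↦ Real.log ‖w - s * a‖) (𝓝[>] 1) (𝓝 (Real.log ‖w - a‖)) := by
    refine Tendsto.mono_left ?_ nhdsWithin_le_nhds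
    have : ContinuousAt (fun s : ℝ ↦ Real.log ‖w - s * a‖) 1 := by
      refine ContinuousAt.log (by fun_prop) ?_
      intro h
      have : w = a := by simpa [sub_eq_zero] using h
      rw [this] at hw
      linarith
    simpa [ContinuousAt] using this
  refine tendsto_nhds_unique hlim (hlim'.congr' ?_)
  filter_upwards [self_mem_nhdsWithin] with s hs using (hPoisson s hs).symm

open Complex Metric in
/-- Poisson's formula for the combinations of `log ‖z + 1‖`, `log ‖z - 1‖` and constants. -/
lemma circleAverage_poissonKernel_combination {w : ℂ} (hw : ‖w‖ < 1) (A B C : ℝ) :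
    Real.circleAverage (fun z ↦ poissonKernel 0 w z *
      (A * Real.log ‖z - (-1)‖ + B * Real.log ‖z - 1‖ + C)) 0 1 =
      A * Real.log ‖w - (-1)‖ + B * Real.log ‖w - 1‖ + C := by
  have hw' : w ∈ ball (0 : ℂ) 1 := by simpa using hw
  have hK : ContinuousOn (poissonKernel 0 w) (sphere 0 |1|) := by
    rw [poissonKernel_eq_re_herglotzRieszKernel]
    exact continuous_re.comp_continuousOn (continuousOn_herglotzRieszKernel_sphere hw')
  have hint : ∀ f : ℂ → ℝ, CircleIntegrable f 0 1 →
      CircleIntegrable (poissonKernel 0 w • f) 0 1 := fun f hf ↦ hf.continuousOn_smul hK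
  have i1 := hint _ (circleIntegrable_log_norm_sub_const (c := 0) (a := -1) 1)
  have i2 := hint _ (circleIntegrable_log_norm_sub_const (c := 0) (a := 1) 1)
  have i3 := hint _ (circleIntegrable_const C 0 1)
  have e1 := circleAverage_poissonKernel_log_norm_sub (a := -1) hw (by simp)
  have e2 := circleAverage_poissonKernel_log_norm_sub (a := 1) hw (by simp)
  have e3 : Real.circleAverage (poissonKernel 0 w • fun _ ↦ C) 0 1 = C :=
    InnerProductSpace.HarmonicOnNhd.circleAverage_poissonKernel_smul (f := fun _ : ℂ ↦ C)
      (fun _ _ ↦ InnerProductSpace.harmonicAt_const C) hw'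
  have : (fun z ↦ poissonKernel 0 w z *
      (A * Real.log ‖z - (-1)‖ + B * Real.log ‖z - 1‖ + C)) =
      (A • (poissonKernel 0 w • fun z : ℂ ↦ Real.log ‖z - (-1)‖) +
        B • (poissonKernel 0 w • fun z : ℂ ↦ Real.log ‖z - 1‖)) +
        (poissonKernel 0 w • fun _ ↦ C) := by
    ext z
    simp only [Pi.add_apply, Pi.smul_apply, smul_eq_mul, Pi.mul_apply]
    ring
  rw [this, Real.circleAverage_add ((i1.const_smul).add i2.const_smul) i3,
    Real.circleAverage_add i1.const_smul i2.const_smul, Real.circleAverage_smul,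
    Real.circleAverage_smul, e1, e2, e3]
  rfl

/-- Half-angle form of `|e^{it} + 1|`. -/
lemma norm_circleMap_add_one (t : ℝ) : ‖circleMap 0 1 t - (-1)‖ = 2 * |Real.cos (t / 2)| := by
  have h : ‖circleMap 0 1 t - (-1)‖ ^ 2 = (2 * |Real.cos (t / 2)|) ^ 2 := by
    rw [← Complex.normSq_eq_norm_sq, mul_pow, sq_abs, Real.cos_sq]
    simp [circleMap, Complex.normSq_apply, Complex.exp_re, Complex.exp_im]
    have := Real.sin_sq_add_cos_sq t
    rw [mul_div_cancel₀ _ (two_ne_zero)]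
    nlinarith
  exact (pow_left_inj₀ (by positivity) (by positivity) two_ne_zero).1 h

/-- Half-angle form of `|e^{it} - 1|`. -/
lemma norm_circleMap_sub_one (t : ℝ) : ‖circleMap 0 1 t - 1‖ = 2 * |Real.sin (t / 2)| := by
  have h : ‖circleMap 0 1 t - 1‖ ^ 2 = (2 * |Real.sin (t / 2)|) ^ 2 := by
    rw [← Complex.normSq_eq_norm_sq, mul_pow, sq_abs, Real.sin_sq_eq_half_sub]
    simp [circleMap, Complex.normSq_apply, Complex.exp_re, Complex.exp_im]
    have := Real.sin_sq_add_cos_sq t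
    rw [mul_div_cancel₀ _ (two_ne_zero)]
    nlinarith
  exact (pow_left_inj₀ (by positivity) (by positivity) two_ne_zero).1 h

/-- The kernel at the exterior point `-η` is minus the Poisson kernel at the reflected interior
point `-1/η`. -/
lemma kernel_eq_neg_poissonKernel (t : ℝ) {r : ℝ} (hr : 1 < r) :
    (1 - r ^ 2) / (1 - 2 * r * Real.cos (Real.pi - t) + r ^ 2) =
      -poissonKernel 0 ((-r⁻¹ : ℝ) : ℂ) (circleMap 0 1 t) := by
  have hr0 : r ≠ 0 := by positivity
  have h : ‖circleMap 0 1 t - 0 - (((-r⁻¹ : ℝ) : ℂ) - 0)‖ ^ 2 =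
      (1 + 2 * r * Real.cos t + r ^ 2) / r ^ 2 := by
    rw [← Complex.normSq_eq_norm_sq]
    simp [circleMap, Complex.normSq_apply, Complex.exp_re, Complex.exp_im]
    field_simp
    nlinarith [Real.sin_sq_add_cos_sq t]
  have hD : 1 + 2 * r * Real.cos t + r ^ 2 ≠ 0 := by
    nlinarith [Real.neg_one_le_cos t, sq_pos_of_pos (sub_pos.2 hr)]
  rw [poissonKernel_def, h, Real.cos_pi_sub]
  simp only [sub_zero, norm_circleMap_zero, Complex.norm_real, norm_neg, norm_inv, abs_one,
    Real.norm_eq_abs, inv_pow, sq_abs]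
  have hD' : 1 - 2 * r * -Real.cos t + r ^ 2 ≠ 0 := by
    convert hD using 1; ring
  field_simp
  ring

/-- The `log` of the weight as a combination of `log |e^{it} ± 1|`, off the zeros of `sin`. -/
lemma log_weight (α β t : ℝ) (ht : Real.sin t ≠ 0) :
    Real.log (|Real.cos (t / 2)| ^ (2 * α) * |Real.sin (t / 2)| ^ (2 * β) * |Real.sin t|) =
      (2 * α + 1) * Real.log ‖circleMap 0 1 t - (-1)‖ +
        (2 * β + 1) * Real.log ‖circleMap 0 1 t - 1‖ + -(2 * α + 2 * β + 1) * Real.log 2 := by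
  have hs : Real.sin t = 2 * Real.sin (t / 2) * Real.cos (t / 2) := by
    rw [← Real.sin_two_mul]; congr 1; ring
  have h1 : 0 < |Real.sin (t / 2)| := abs_pos.2 fun h ↦ ht (by rw [hs, h]; ring)
  have h2 : 0 < |Real.cos (t / 2)| := abs_pos.2 fun h ↦ ht (by rw [hs, h]; ring)
  rw [norm_circleMap_add_one, norm_circleMap_sub_one, hs, abs_mul, abs_mul, abs_two,
    Real.log_mul (by positivity) (by positivity), Real.log_mul (by positivity) (by positivity),
    Real.log_rpow h2, Real.log_rpow h1, Real.log_mul (by positivity) (by positivity),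
    Real.log_mul (by positivity) (by positivity), Real.log_mul (by positivity) (by positivity)]
  ring

/-- The value of the log-modulus of the Szegő function of the weight `x^α (1-x)^β`
at `ζ(-1)`: the Poisson-type integral equals `ln(2^{-3/4} (1+√2)^{α+1} (1+1/√2)^β)`. -/
theorem szego_function_at_minus_one (α β : ℝ) (hα : -1 < α) (hβ : -1 < β) :
    (1 / (4 * Real.pi)) *
      (∫ t in (-Real.pi)..Real.pi,
        Real.log (|Real.cos (t / 2)| ^ (2 * α) * |Real.sin (t / 2)| ^ (2 * β) * |Real.sin t|) *
          ((1 - eta ^ 2) / (1 - 2 * eta * Real.cos (Real.pi - t) + eta ^ 2))) =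
    Real.log (2 ^ (-(3 : ℝ) / 4) * (1 + Real.sqrt 2) ^ (α + 1) *
      (1 + 1 / Real.sqrt 2) ^ β) := by
  have hs2 : Real.sqrt 2 ^ 2 = 2 := Real.sq_sqrt (by norm_num)
  have hs1 : 1 < Real.sqrt 2 := by
    rw [Real.lt_sqrt] <;> norm_num
  set q := Real.sqrt 2 with hq
  have heta : 1 < eta := by unfold eta; nlinarith
  have hinv : eta⁻¹ = 3 - 2 * q := by
    unfold eta
    rw [← hq]
    refine (eq_inv_of_mul_eq_one_left ?_).symm
    nlinarith
  have hw : ‖((-eta⁻¹ : ℝ) : ℂ)‖ < 1 := by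
    rw [Complex.norm_real, norm_neg, Real.norm_of_nonneg (by positivity)]
    exact inv_lt_one_of_one_lt₀ heta
  set F : ℂ → ℝ := fun z ↦ poissonKernel 0 ((-eta⁻¹ : ℝ) : ℂ) z *
      ((2 * α + 1) * Real.log ‖z - (-1)‖ + (2 * β + 1) * Real.log ‖z - 1‖ +
        -(2 * α + 2 * β + 1) * Real.log 2) with hF
  have havg := circleAverage_poissonKernel_combination hw (2 * α + 1) (2 * β + 1)
    (-(2 * α + 2 * β + 1) * Real.log 2)
  rw [← hF, Real.circleAverage_eq_integral_add (-Real.pi),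
    intervalIntegral.integral_comp_add_right (fun t ↦ F (circleMap 0 1 t))] at havg
  have hsin : ∀ᵐ t : ℝ, Real.sin t ≠ 0 := by
    have hc : {t : ℝ | Real.sin t = 0}.Countable := by
      refine (Set.countable_range fun n : ℤ ↦ (n : ℝ) * Real.pi).mono fun t ht ↦ ?_
      exact Real.sin_eq_zero_iff.1 ht
    filter_upwards [hc.ae_notMem MeasureTheory.volume] with t ht using ht
  have hI : (∫ t in (-Real.pi)..Real.pi,
        Real.log (|Real.cos (t / 2)| ^ (2 * α) * |Real.sin (t / 2)| ^ (2 * β) * |Real.sin t|) *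
          ((1 - eta ^ 2) / (1 - 2 * eta * Real.cos (Real.pi - t) + eta ^ 2))) =
      -∫ t in (-Real.pi)..Real.pi, F (circleMap 0 1 t) := by
    rw [← intervalIntegral.integral_neg]
    refine intervalIntegral.integral_congr_ae ?_
    filter_upwards [hsin] with t ht _
    rw [log_weight α β t ht, kernel_eq_neg_poissonKernel t heta, hF]
    ring
  have hbounds : (0 : ℝ) + -Real.pi = -Real.pi ∧ 2 * Real.pi + -Real.pi = Real.pi := by
    constructor <;> ring
  rw [hbounds.1, hbounds.2, smul_eq_mul, inv_mul_eq_iff_eq_mul₀ (by positivity)] at havg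
  rw [hI, havg]
  have hq2 : q < 3 / 2 := by nlinarith
  have n1 : ‖((-eta⁻¹ : ℝ) : ℂ) - (-1)‖ = 2 * (q - 1) := by
    rw [show ((-eta⁻¹ : ℝ) : ℂ) - (-1) = ((2 * (q - 1) : ℝ) : ℂ) by
      rw [hinv]; push_cast; ring, Complex.norm_real, Real.norm_of_nonneg (by linarith)]
  have n2 : ‖((-eta⁻¹ : ℝ) : ℂ) - 1‖ = 2 * (2 - q) := by
    rw [show ((-eta⁻¹ : ℝ) : ℂ) - 1 = ((-(2 * (2 - q)) : ℝ) : ℂ) by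
      rw [hinv]; push_cast; ring, Complex.norm_real, norm_neg,
      Real.norm_of_nonneg (by linarith)]
  -- All logarithms reduce to `log 2 = 2 log √2` and `log (1 + √2)`.
  have l0 : Real.log 2 = 2 * Real.log q := by
    have h : Real.log (q ^ 2) = 2 * Real.log q := by rw [Real.log_pow]; norm_num
    rwa [hs2] at h
  have l1 : Real.log (q - 1) = -Real.log (1 + q) := by
    rw [← Real.log_inv]
    congr 1
    refine eq_inv_of_mul_eq_one_left ?_
    nlinarith
  have l2 : Real.log (2 - q) = Real.log q - Real.log (1 + q) := by
    rw [← Real.log_div (by positivity) (by positivity)]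
    congr 1
    rw [eq_div_iff (by positivity)]
    nlinarith
  have l3 : Real.log (1 + 1 / q) = Real.log (1 + q) - Real.log q := by
    rw [← Real.log_div (by positivity) (by positivity)]
    congr 1
    field_simp
    ring
  rw [n1, n2, Real.log_mul (by norm_num) (by linarith), Real.log_mul (by norm_num) (by linarith),
    Real.log_mul (by positivity) (by positivity), Real.log_mul (by positivity) (by positivity),
    Real.log_rpow (by norm_num), Real.log_rpow (by positivity), Real.log_rpow (by positivity),
    l1, l2, l3, l0]
  have hpi := Real.pi_ne_zero
  generalize Real.log q = x, Real.log (1 + q) = y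
  field_simp
  ring
end

section
/- Let η = (1+√2)². Then (1/2π) ∫_0^π ln(cos(t/2)) · (1 − η²)/(1 + 2η cos t + η²) dt = ln(1+√2)/2. -/
/-- The Poisson formula on the unit circle, at the point `-r`, for the harmonic function
`z ↦ log ‖(1 + s z) / 2‖`, with kernel and function written out in the angle. -/
lemma integral_poisson_dilated {r s : ℝ} (hr0 : 0 < r) (hr1 : r < 1) (hs0 : 0 < s) (hs1 : s < 1) :
    ∫ t in (0 : ℝ)..(2 * Real.pi), (1 - r ^ 2) / (1 + 2 * r * Real.cos t + r ^ 2) *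
      (Real.log ((1 + 2 * s * Real.cos t + s ^ 2) / 4) / 2) =
    2 * Real.pi * Real.log ((1 - s * r) / 2) := by
  have hf : InnerProductSpace.HarmonicOnNhd (fun z : ℂ ↦ Real.log ‖(1 + s * z) / 2‖)
      (Metric.closedBall 0 1) := by
    intro z hz
    apply AnalyticAt.harmonicAt_log_norm (by fun_prop)
    intro h
    have h1 : (s : ℂ) * z = -1 := by linear_combination 2 * h
    have h2 : s * ‖z‖ = 1 := by
      have := congrArg norm h1
      simpa [abs_of_pos hs0] using this
    have h3 : ‖z‖ ≤ 1 := by simpa using hz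
    nlinarith
  have hw : (-(r : ℂ)) ∈ Metric.ball (0 : ℂ) 1 := by
    simpa [abs_of_pos hr0] using hr1
  have key := hf.circleAverage_poissonKernel_smul hw
  -- squared norms on the circle, by the law of cosines
  have hns (a t : ℝ) : ‖1 + (a : ℂ) * circleMap 0 1 t‖ ^ 2 = 1 + 2 * a * Real.cos t + a ^ 2 := by
    rw [← Complex.normSq_eq_norm_sq, Complex.normSq_apply]
    simp [circleMap, Complex.exp_re, Complex.exp_im]
    linear_combination a ^ 2 * Real.sin_sq_add_cos_sq t
  have hns' (t : ℝ) : ‖circleMap 0 1 t + (r : ℂ)‖ ^ 2 = 1 + 2 * r * Real.cos t + r ^ 2 := by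
    rw [← Complex.normSq_eq_norm_sq, Complex.normSq_apply]
    simp [circleMap, Complex.exp_re, Complex.exp_im]
    linear_combination Real.sin_sq_add_cos_sq t
  have hval : Real.log ‖(1 + (s : ℂ) * -(r : ℂ)) / 2‖ = Real.log ((1 - s * r) / 2) := by
    have : (1 + (s : ℂ) * -(r : ℂ)) / 2 = (((1 - s * r) / 2 : ℝ) : ℂ) := by push_cast; ring
    rw [this, Complex.norm_real, Real.norm_eq_abs, Real.log_abs]
  rw [hval, Real.circleAverage_def, smul_eq_mul, inv_mul_eq_iff_eq_mul₀ (by positivity)] at key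
  rw [← key]
  refine intervalIntegral.integral_congr fun t _ ↦ ?_
  have hlog : Real.log ‖(1 + (s : ℂ) * circleMap 0 1 t) / 2‖ =
      Real.log ((1 + 2 * s * Real.cos t + s ^ 2) / 4) / 2 := by
    rw [← hns s t, show ‖1 + (s : ℂ) * circleMap 0 1 t‖ ^ 2 / 4 =
      ‖(1 + (s : ℂ) * circleMap 0 1 t) / 2‖ ^ 2 by rw [norm_div]; norm_num; ring, Real.log_pow]
    push_cast; ring
  simp only [Pi.smul_apply', smul_eq_mul, hlog, poissonKernel_def, sub_zero, sub_neg_eq_add,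
    hns', norm_neg, Complex.norm_real, norm_circleMap_zero]
  simp

lemma intervalIntegrable_log_cos_half (a b : ℝ) :
    IntervalIntegrable (fun t ↦ Real.log (Real.cos (t / 2))) MeasureTheory.volume a b := by
  have := (intervalIntegrable_log_cos (a := a / 2) (b := b / 2)).comp_mul_left (c := 1 / 2)
  simpa [Function.comp_def, div_eq_inv_mul] using this

lemma poisson_denom_pos {r : ℝ} (hr0 : 0 < r) (hr1 : r < 1) (t : ℝ) :
    0 < 1 + 2 * r * Real.cos t + r ^ 2 := by
  nlinarith [Real.neg_one_le_cos t, sq_pos_of_pos (sub_pos.2 hr1)]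

lemma continuous_poisson {r : ℝ} (hr0 : 0 < r) (hr1 : r < 1) :
    Continuous fun t : ℝ ↦ (1 - r ^ 2) / (1 + 2 * r * Real.cos t + r ^ 2) :=
  Continuous.div (by fun_prop) (by fun_prop) fun t ↦ (poisson_denom_pos hr0 hr1 t).ne'

/-- The bound that dominates the dilated logarithms as `s → 1⁻`, away from the singularity. -/
lemma abs_log_dilated_le {s t : ℝ} (hs0 : 1 / 2 ≤ s) (hs1 : s ≤ 1) (ht : Real.cos (t / 2) ≠ 0) :
    |Real.log ((1 + 2 * s * Real.cos t + s ^ 2) / 4) / 2| ≤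
      Real.log 2 + |Real.log (Real.cos (t / 2))| := by
  have hc : Real.cos t = 2 * Real.cos (t / 2) ^ 2 - 1 := by
    rw [← Real.cos_two_mul]; ring_nf
  have hpos : 0 < Real.cos (t / 2) ^ 2 := by positivity
  have hlow : Real.cos (t / 2) ^ 2 / 2 ≤ (1 + 2 * s * Real.cos t + s ^ 2) / 4 := by
    rw [hc]; nlinarith [sq_nonneg (1 - s)]
  have hup : (1 + 2 * s * Real.cos t + s ^ 2) / 4 ≤ 1 := by
    nlinarith [Real.cos_le_one t]
  have h1 := Real.log_le_log (by positivity) hlow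
  rw [Real.log_div hpos.ne' two_ne_zero, Real.log_pow] at h1
  have h2 := Real.log_nonpos (by linarith) hup
  have h3 := neg_abs_le (Real.log (Real.cos (t / 2)))
  have h4 : 0 < Real.log 2 := Real.log_pos one_lt_two
  rw [abs_of_nonpos (by linarith)]
  push_cast at h1
  linarith

/-- The Poisson formula at `-r` for `log ‖(1 + z) / 2‖`, despite its singularity at `-1`. Where
`cos (t / 2) < 0`, the convention `log x = log |x|` makes `log (cos (t / 2))` the boundary value. -/
lemma integral_poisson_full {r : ℝ} (hr0 : 0 < r) (hr1 : r < 1) :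
    ∫ t in (0 : ℝ)..(2 * Real.pi), (1 - r ^ 2) / (1 + 2 * r * Real.cos t + r ^ 2) *
      Real.log (Real.cos (t / 2)) =
    2 * Real.pi * Real.log ((1 - r) / 2) := by
  have hP := continuous_poisson hr0 hr1
  have hs : ∀ᶠ s : ℝ in nhdsWithin 1 (Set.Iio 1), 1 / 2 < s ∧ s < 1 :=
    Ioo_mem_nhdsLT (by norm_num)
  -- the only zero of `cos (t / 2)` on `(0, 2π]` is `π`
  have hae : ∀ᵐ t : ℝ, t ∈ Set.uIoc 0 (2 * Real.pi) → Real.cos (t / 2) ≠ 0 := by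
    filter_upwards [MeasureTheory.Measure.ae_ne MeasureTheory.volume Real.pi] with t ht hmem h0
    rw [Set.uIoc_of_le (by positivity)] at hmem
    apply ht
    have hinj := Real.injOn_cos (x₁ := t / 2) (x₂ := Real.pi / 2)
      ⟨by linarith [hmem.1], by linarith [hmem.2]⟩
      ⟨by linarith [Real.pi_pos], by linarith [Real.pi_pos]⟩ (by rw [h0, Real.cos_pi_div_two])
    linarith
  have hlim : Filter.Tendsto (fun s : ℝ ↦ ∫ t in (0 : ℝ)..(2 * Real.pi),
      (1 - r ^ 2) / (1 + 2 * r * Real.cos t + r ^ 2) *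
        (Real.log ((1 + 2 * s * Real.cos t + s ^ 2) / 4) / 2)) (nhdsWithin 1 (Set.Iio 1))
      (nhds (∫ t in (0 : ℝ)..(2 * Real.pi), (1 - r ^ 2) / (1 + 2 * r * Real.cos t + r ^ 2) *
        Real.log (Real.cos (t / 2)))) := by
    refine intervalIntegral.tendsto_integral_filter_of_dominated_convergence
      (fun t ↦ |(1 - r ^ 2) / (1 + 2 * r * Real.cos t + r ^ 2)| *
        (Real.log 2 + |Real.log (Real.cos (t / 2))|)) ?_ ?_ ?_ ?_
    · refine Filter.Eventually.of_forall fun s ↦ Measurable.aestronglyMeasurable ?_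
      fun_prop
    · filter_upwards [hs] with s hs
      filter_upwards [hae] with t ht hmem
      rw [Real.norm_eq_abs, abs_mul]
      exact mul_le_mul_of_nonneg_left (abs_log_dilated_le hs.1.le hs.2.le (ht hmem))
        (abs_nonneg _)
    · exact ((intervalIntegrable_const (c := Real.log 2)).add
        (intervalIntegrable_log_cos_half _ _).abs).continuousOn_mul hP.abs.continuousOn
    · filter_upwards [hae] with t ht hmem
      have ht := ht hmem
      have h1 : (1 + 2 * 1 * Real.cos t + 1 ^ 2) / 4 = Real.cos (t / 2) ^ 2 := by
        rw [Real.cos_sq, show 2 * (t / 2) = t by ring]; ring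
      have h2 : Real.log (Real.cos (t / 2)) =
          Real.log ((1 + 2 * 1 * Real.cos t + 1 ^ 2) / 4) / 2 := by
        rw [h1, Real.log_pow]; push_cast; ring
      rw [h2]
      have hcont : ContinuousAt (fun s : ℝ ↦ (1 - r ^ 2) / (1 + 2 * r * Real.cos t + r ^ 2) *
          (Real.log ((1 + 2 * s * Real.cos t + s ^ 2) / 4) / 2)) 1 := by
        refine continuousAt_const.mul ((ContinuousAt.log (by fun_prop) ?_).div_const 2)
        rw [h1]; positivity
      exact hcont.tendsto.mono_left nhdsWithin_le_nhds
  have hlim' : Filter.Tendsto (fun s : ℝ ↦ 2 * Real.pi * Real.log ((1 - s * r) / 2))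
      (nhdsWithin 1 (Set.Iio 1)) (nhds (2 * Real.pi * Real.log ((1 - r) / 2))) := by
    have hcont : ContinuousAt (fun s : ℝ ↦ 2 * Real.pi * Real.log ((1 - s * r) / 2)) 1 := by
      refine continuousAt_const.mul (ContinuousAt.log (by fun_prop) ?_)
      have : 0 < 1 - 1 * r := by linarith
      positivity
    simpa using hcont.tendsto.mono_left nhdsWithin_le_nhds
  refine tendsto_nhds_unique (hlim.congr' ?_) hlim'
  filter_upwards [hs] with s hs
  exact integral_poisson_dilated hr0 hr1 (by linarith [hs.1]) hs.2

lemma integral_poisson_half {r : ℝ} (hr0 : 0 < r) (hr1 : r < 1) :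
    ∫ t in (0 : ℝ)..Real.pi, (1 - r ^ 2) / (1 + 2 * r * Real.cos t + r ^ 2) *
      Real.log (Real.cos (t / 2)) = Real.pi * Real.log ((1 - r) / 2) := by
  have hint (a b : ℝ) : IntervalIntegrable (fun t ↦
      (1 - r ^ 2) / (1 + 2 * r * Real.cos t + r ^ 2) * Real.log (Real.cos (t / 2)))
      MeasureTheory.volume a b :=
    (intervalIntegrable_log_cos_half a b).continuousOn_mul
      (continuous_poisson hr0 hr1).continuousOn
  have hfull := integral_poisson_full hr0 hr1
  rw [← intervalIntegral.integral_add_adjacent_intervals (hint 0 Real.pi) (hint _ _)] at hfull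
  have hsymm := intervalIntegral.integral_comp_sub_left (a := 0) (b := Real.pi) (fun t ↦
      (1 - r ^ 2) / (1 + 2 * r * Real.cos t + r ^ 2) * Real.log (Real.cos (t / 2))) (2 * Real.pi)
  have hcos (t : ℝ) : Real.cos ((2 * Real.pi - t) / 2) = -Real.cos (t / 2) := by
    rw [← Real.cos_pi_sub]; ring_nf
  simp only [hcos, Real.cos_two_pi_sub, Real.log_neg_eq_log, sub_zero,
    show 2 * Real.pi - Real.pi = Real.pi by ring] at hsymm
  linarith

/-- `(1/2π) ∫_0^π ln(cos(t/2)) (1-η²)/(1+2η cos t+η²) dt = ln(1+√2)/2`. -/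
theorem log_cos_poisson_integral :
    (1 / (2 * Real.pi)) *
      (∫ t in (0 : ℝ)..Real.pi,
        Real.log (Real.cos (t / 2)) * ((1 - eta ^ 2) / (1 + 2 * eta * Real.cos t + eta ^ 2))) =
    Real.log (1 + Real.sqrt 2) / 2 := by
  have h2 : Real.sqrt 2 ^ 2 = 2 := Real.sq_sqrt (by norm_num)
  have hlow : 1 < Real.sqrt 2 := by rw [Real.lt_sqrt] <;> norm_num
  have heta : 1 < eta := by unfold eta; nlinarith
  have heta0 : 0 < eta := by linarith
  have hr0 : 0 < eta⁻¹ := by positivity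
  have hr1 : eta⁻¹ < 1 := inv_lt_one_of_one_lt₀ heta
  -- replacing `η` by `1 / η` only changes the sign of the kernel
  have hcongr : ∫ t in (0 : ℝ)..Real.pi, Real.log (Real.cos (t / 2)) *
      ((1 - eta ^ 2) / (1 + 2 * eta * Real.cos t + eta ^ 2)) =
      -∫ t in (0 : ℝ)..Real.pi, (1 - eta⁻¹ ^ 2) / (1 + 2 * eta⁻¹ * Real.cos t + eta⁻¹ ^ 2) *
        Real.log (Real.cos (t / 2)) := by
    rw [← intervalIntegral.integral_neg]
    refine intervalIntegral.integral_congr fun t _ ↦ ?_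
    have hk : (1 - eta⁻¹ ^ 2) / (1 + 2 * eta⁻¹ * Real.cos t + eta⁻¹ ^ 2) =
        -((1 - eta ^ 2) / (1 + 2 * eta * Real.cos t + eta ^ 2)) := by
      rw [← mul_div_mul_left _ _ (pow_ne_zero 2 heta0.ne'), ← neg_div]
      congr 1 <;> field_simp <;> ring
    simp only [hk]
    ring
  have hval : (1 - eta⁻¹) / 2 = (1 + Real.sqrt 2)⁻¹ := by
    unfold eta
    have : 1 + Real.sqrt 2 ≠ 0 := by positivity
    field_simp
    nlinarith
  rw [hcongr, integral_poisson_half hr0 hr1, hval, Real.log_inv]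
  field_simp
end

section
/- Let η = (1+√2)². Then (1/2π) ∫_0^π ln(sin(t/2)) · (1 − η²)/(1 + 2η cos t + η²) dt = ln(1+√2)/2 − (ln 2)/4. -/
/-- The Poisson kernel of the unit disc at the interior point `-1/a`, as a function of the angle. -/
noncomputable def angleKernel (a t : ℝ) : ℝ := (a ^ 2 - 1) / (1 + 2 * a * Real.cos t + a ^ 2)

lemma angleKernel_denom_pos {a : ℝ} (ha : 1 < a) (t : ℝ) :
    0 < 1 + 2 * a * Real.cos t + a ^ 2 := by
  nlinarith [Real.neg_one_le_cos t, sq_pos_of_pos (sub_pos.mpr ha)]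

lemma continuous_angleKernel {a : ℝ} (ha : 1 < a) : Continuous (angleKernel a) := by
  unfold angleKernel
  exact Continuous.div (by fun_prop) (by fun_prop) fun t => (angleKernel_denom_pos ha t).ne'

lemma re_herglotzRieszKernel_circleMap {a : ℝ} (ha : 1 < a) (t : ℝ) :
    (herglotzRieszKernel 0 ((-a⁻¹ : ℝ) : ℂ) (circleMap 0 1 t)).re = angleKernel a t := by
  have ha0 : a ≠ 0 := by linarith
  have h1 : ‖circleMap 0 1 t - 0‖ ^ 2 = 1 := by simp
  have h2 : ‖((-a⁻¹ : ℝ) : ℂ) - 0‖ ^ 2 = (a⁻¹) ^ 2 := by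
    rw [sub_zero, Complex.norm_real, Real.norm_eq_abs, sq_abs, neg_sq]
  have h3 : ‖(circleMap 0 1 t - 0) - (((-a⁻¹ : ℝ) : ℂ) - 0)‖ ^ 2
      = 1 + 2 * a⁻¹ * Real.cos t + (a⁻¹) ^ 2 := by
    rw [← Complex.normSq_eq_norm_sq, Complex.normSq_apply]
    simp only [sub_zero, circleMap, Complex.ofReal_one, one_mul, zero_add, Complex.sub_re,
      Complex.sub_im, Complex.exp_ofReal_mul_I_re, Complex.exp_ofReal_mul_I_im, Complex.ofReal_re,
      Complex.ofReal_im]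
    nlinarith [Real.sin_sq_add_cos_sq t]
  have := congrFun (poissonKernel_eq_re_herglotzRieszKernel (c := 0) (w := ((-a⁻¹ : ℝ) : ℂ)))
    (circleMap 0 1 t)
  rw [Function.comp_apply] at this
  rw [← this, poissonKernel, h1, h2, h3, angleKernel]
  have hd := (angleKernel_denom_pos ha t).ne'
  have hd' : 1 + 2 * a⁻¹ * Real.cos t + (a⁻¹) ^ 2
      = (1 + 2 * a * Real.cos t + a ^ 2) / a ^ 2 := by
    field_simp
    ring
  rw [hd']
  field_simp

lemma log_norm_circleMap_sub_one {t : ℝ} (ht : t ∈ Set.Ioo 0 (2 * Real.pi)) :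
    Real.log ‖circleMap 0 1 t - 1‖ = Real.log 2 + Real.log (Real.sin (t / 2)) := by
  have hs : 0 < Real.sin (t / 2) :=
    Real.sin_pos_of_pos_of_lt_pi (by linarith [ht.1]) (by linarith [ht.2])
  have : ‖circleMap 0 1 t - 1‖ = 2 * Real.sin (t / 2) := by
    rw [← sq_eq_sq₀ (norm_nonneg _) (by positivity), ← Complex.normSq_eq_norm_sq,
      Complex.normSq_apply]
    simp only [circleMap, Complex.ofReal_one, one_mul, zero_add, Complex.sub_re,
      Complex.sub_im, Complex.exp_ofReal_mul_I_re, Complex.exp_ofReal_mul_I_im, Complex.one_re,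
      Complex.one_im]
    have hc : Real.cos t = 1 - 2 * Real.sin (t / 2) ^ 2 := by
      rw [← Real.cos_sq_add_sin_sq (t / 2), ← sub_eq_zero]
      have := Real.cos_two_mul' (t / 2)
      rw [mul_div_cancel₀ t two_ne_zero] at this
      rw [this]; ring
    nlinarith [Real.sin_sq_add_cos_sq t]
  rw [this, Real.log_mul two_ne_zero hs.ne']

lemma neg_inv_mem_ball {a : ℝ} (ha : 1 < a) : ((-a⁻¹ : ℝ) : ℂ) ∈ Metric.ball (0 : ℂ) 1 := by
  rw [mem_ball_zero_iff, Complex.norm_real, Real.norm_eq_abs, abs_neg,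
    abs_of_pos (by positivity)]
  exact inv_lt_one_of_one_lt₀ ha

lemma integral_angleKernel {a : ℝ} (ha : 1 < a) :
    ∫ t in (0 : ℝ)..(2 * Real.pi), angleKernel a t = 2 * Real.pi := by
  have h := DiffContOnCl.circleAverage_re_herglotzRieszKernel_smul (f := fun _ : ℂ => (1 : ℂ))
    (c := 0) (R := 1) diffContOnCl_const (neg_inv_mem_ball ha)
  rw [Real.circleAverage_def] at h
  simp only [Pi.smul_apply', Function.comp_apply, re_herglotzRieszKernel_circleMap ha,
    Complex.real_smul, mul_one] at h
  rw [intervalIntegral.integral_ofReal] at h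
  have h' : (2 * Real.pi)⁻¹ * ∫ t in (0 : ℝ)..(2 * Real.pi), angleKernel a t = 1 := by
    exact_mod_cast h
  have := Real.pi_pos
  field_simp at h'
  linarith

lemma intervalIntegrable_log_sin_half_mul {a : ℝ} (ha : 1 < a) (x y : ℝ) :
    IntervalIntegrable (fun t => Real.log (Real.sin (t / 2)) * angleKernel a t)
      MeasureTheory.volume x y := by
  apply IntervalIntegrable.mul_continuousOn _ (continuous_angleKernel ha).continuousOn
  have h : IntervalIntegrable (fun t => Real.log (Real.sin t)) MeasureTheory.volume
      (x / 2) (y / 2) := intervalIntegrable_log_sin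
  simpa [div_eq_inv_mul] using h.comp_mul_left (c := 2⁻¹)

lemma integral_log_sin_half_mul_two_pi {a : ℝ} (ha : 1 < a) :
    ∫ t in (0 : ℝ)..(2 * Real.pi), Real.log (Real.sin (t / 2)) * angleKernel a t
      = 2 * Real.pi * (Real.log (1 + a⁻¹) - Real.log 2) := by
  have h := circleAverage_re_herglotzRieszKernel_mul_log (c := 0) (R := 1) (ρ := 1) (by simp)
    (neg_inv_mem_ball ha)
  have hn : ‖((-a⁻¹ : ℝ) : ℂ) - 1‖ = 1 + a⁻¹ := by
    rw [← Complex.ofReal_one, ← Complex.ofReal_sub, Complex.norm_real, Real.norm_eq_abs,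
      ← abs_neg, abs_of_pos (by have : 0 < a⁻¹ := by positivity
                                linarith)]
    ring
  rw [Real.circleAverage_def, hn] at h
  simp only [Pi.mul_apply, Function.comp_apply, re_herglotzRieszKernel_circleMap ha,
    smul_eq_mul] at h
  have hpi := Real.pi_pos
  -- The two integrands differ at the endpoints, where `Real.log 0 = 0`.
  have hcongr : ∫ t in (0 : ℝ)..(2 * Real.pi), angleKernel a t * Real.log ‖circleMap 0 1 t - 1‖
      = ∫ t in (0 : ℝ)..(2 * Real.pi), (angleKernel a t * Real.log 2
        + Real.log (Real.sin (t / 2)) * angleKernel a t) := by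
    rw [intervalIntegral.integral_of_le (by positivity),
      intervalIntegral.integral_of_le (by positivity),
      MeasureTheory.integral_Ioc_eq_integral_Ioo, MeasureTheory.integral_Ioc_eq_integral_Ioo]
    refine MeasureTheory.setIntegral_congr_fun measurableSet_Ioo fun t ht => ?_
    simp only [log_norm_circleMap_sub_one ht]
    ring
  rw [hcongr, intervalIntegral.integral_add
    (((continuous_angleKernel ha).intervalIntegrable _ _).mul_const _)
    (intervalIntegrable_log_sin_half_mul ha _ _), intervalIntegral.integral_mul_const,
    integral_angleKernel ha, inv_mul_eq_iff_eq_mul₀ (by positivity)] at h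
  linarith

lemma integral_log_sin_half_mul_pi {a : ℝ} (ha : 1 < a) :
    ∫ t in (0 : ℝ)..Real.pi, Real.log (Real.sin (t / 2)) * angleKernel a t
      = Real.pi * (Real.log (1 + a⁻¹) - Real.log 2) := by
  have hsymm := intervalIntegral.integral_comp_sub_left (a := 0) (b := Real.pi)
    (fun t => Real.log (Real.sin (t / 2)) * angleKernel a t) (2 * Real.pi)
  have hrefl (t : ℝ) : Real.log (Real.sin ((2 * Real.pi - t) / 2)) * angleKernel a (2 * Real.pi - t)
      = Real.log (Real.sin (t / 2)) * angleKernel a t := by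
    rw [show (2 * Real.pi - t) / 2 = Real.pi - t / 2 by ring, Real.sin_pi_sub, angleKernel,
      Real.cos_two_pi_sub, angleKernel]
  simp only [hrefl] at hsymm
  rw [sub_zero, show 2 * Real.pi - Real.pi = Real.pi by ring] at hsymm
  have hadd := intervalIntegral.integral_add_adjacent_intervals
    (intervalIntegrable_log_sin_half_mul ha 0 Real.pi)
    (intervalIntegrable_log_sin_half_mul ha Real.pi (2 * Real.pi))
  rw [← hsymm, integral_log_sin_half_mul_two_pi ha] at hadd
  linarith

/-- `(1/2π) ∫_0^π ln(sin(t/2)) (1-η²)/(1+2η cos t+η²) dt = ln(1+√2)/2 - (ln 2)/4`. -/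
theorem log_sin_poisson_integral :
    (1 / (2 * Real.pi)) *
      (∫ t in (0 : ℝ)..Real.pi,
        Real.log (Real.sin (t / 2)) * ((1 - eta ^ 2) / (1 + 2 * eta * Real.cos t + eta ^ 2))) =
    Real.log (1 + Real.sqrt 2) / 2 - Real.log 2 / 4 := by
  have hs : 0 < Real.sqrt 2 := by positivity
  have hs2 : Real.sqrt 2 ^ 2 = 2 := Real.sq_sqrt (by norm_num)
  have ha : 1 < eta := by unfold eta; nlinarith
  have hneg (t : ℝ) : Real.log (Real.sin (t / 2)) *
      ((1 - eta ^ 2) / (1 + 2 * eta * Real.cos t + eta ^ 2))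
      = -(Real.log (Real.sin (t / 2)) * angleKernel eta t) := by
    rw [angleKernel, ← mul_neg, ← neg_div, neg_sub]
  simp only [hneg]
  rw [intervalIntegral.integral_neg, integral_log_sin_half_mul_pi ha]
  have hval : 1 + eta⁻¹ = 2 * (Real.sqrt 2 / (1 + Real.sqrt 2)) := by
    unfold eta
    field_simp
    nlinarith
  rw [hval, Real.log_mul (by norm_num) (by positivity), Real.log_div (by positivity) (by positivity),
    Real.log_sqrt (by norm_num)]
  have := Real.pi_pos
  field_simp
  ring
end

section
/- The improper integral (√2 / 4π) ∫_0^1 ln(1−y) / ( √(y(1−y)) · (y − 2) ) dy equals ln(1+√2)/2. -/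
/-!
The substitution `y = t² / (1 + t²)` turns the integral into `2 ∫₀^∞ log (1 + t²) / (2 + t²) dt`.
For `b > 0`, one has `∫₀^∞ log (1 + t²) / (b² + t²) dt = (π / b) log (1 + b)`: write
`log (1 + t²) = ∫₀¹ 2 a t² / (1 + a² t²) da` and exchange the integrals (`integral_log_div`). By
partial fractions the inner integral over `t` is then `π / (1 + a b)` (`integral_kernel_Ioi`).
The case `b = √2` is the claim.
-/

open MeasureTheory Set Filter Topology

/-- The integrand of the double integral representing `∫₀^∞ log (1 + t²) / (b² + t²) dt`. -/
noncomputable def logKernel (b a t : ℝ) : ℝ := 2 * a * t ^ 2 / ((1 + a ^ 2 * t ^ 2) * (b ^ 2 + t ^ 2))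

lemma logKernel_nonneg {b a : ℝ} (ha : 0 ≤ a) (t : ℝ) : 0 ≤ logKernel b a t := by
  unfold logKernel; positivity

lemma hasDerivAt_kernel_primitive {b a : ℝ} (hb : 0 < b) (ha : 0 < a) (hab : a * b ≠ 1) (t : ℝ) :
    HasDerivAt (fun t => 2 * a / (a ^ 2 * b ^ 2 - 1) *
      (b * Real.arctan (t / b) - Real.arctan (a * t) / a)) (logKernel b a t) t := by
  have h1 : HasDerivAt (fun t : ℝ => t / b) (1 / b) t := (hasDerivAt_id t).div_const b
  have h2 : HasDerivAt (fun t : ℝ => a * t) (a * 1) t := (hasDerivAt_id t).const_mul a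
  have h := ((h1.arctan.const_mul b).sub (h2.arctan.div_const a)).const_mul
    (2 * a / (a ^ 2 * b ^ 2 - 1))
  refine h.congr_deriv ?_
  have h3 : a ^ 2 * b ^ 2 - 1 ≠ 0 := by
    have : a ^ 2 * b ^ 2 - 1 = (a * b - 1) * (a * b + 1) := by ring
    rw [this]
    exact mul_ne_zero (sub_ne_zero.2 hab) (by positivity)
  have h4 : 1 + a ^ 2 * t ^ 2 ≠ 0 := by positivity
  have h5 : b ^ 2 + t ^ 2 ≠ 0 := by positivity
  have e1 : b * (1 / (1 + (t / b) ^ 2) * (1 / b)) = b ^ 2 / (b ^ 2 + t ^ 2) := by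
    field_simp
  have e2 : 1 / (1 + (a * t) ^ 2) * (a * 1) / a = 1 / (1 + a ^ 2 * t ^ 2) := by
    rw [mul_pow]; field_simp
  rw [e1, e2, logKernel]
  field_simp
  ring

lemma tendsto_kernel_primitive {b a : ℝ} (hb : 0 < b) (ha : 0 < a) (hab : a * b ≠ 1) :
    Tendsto (fun t => 2 * a / (a ^ 2 * b ^ 2 - 1) *
      (b * Real.arctan (t / b) - Real.arctan (a * t) / a)) atTop (𝓝 (Real.pi / (1 + a * b))) := by
  have harc : Tendsto Real.arctan atTop (𝓝 (Real.pi / 2)) :=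
    Real.tendsto_arctan_atTop.mono_right nhdsWithin_le_nhds
  have h1 := harc.comp (tendsto_id.atTop_div_const hb)
  have h2 := harc.comp (tendsto_id.const_mul_atTop ha)
  have h := ((h1.const_mul b).sub (h2.div_const a)).const_mul (2 * a / (a ^ 2 * b ^ 2 - 1))
  suffices hlim : 2 * a / (a ^ 2 * b ^ 2 - 1) * (b * (Real.pi / 2) - Real.pi / 2 / a) =
      Real.pi / (1 + a * b) by
    rw [hlim] at h
    exact h
  have h3 : a * b - 1 ≠ 0 := sub_ne_zero.2 hab
  have h4 : 1 + a * b ≠ 0 := by positivity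
  have : a ^ 2 * b ^ 2 - 1 = (a * b - 1) * (1 + a * b) := by ring
  rw [this]
  field_simp

lemma integrableOn_kernel_Ioi {b a : ℝ} (hb : 0 < b) (ha : 0 < a) (hab : a * b ≠ 1) :
    IntegrableOn (logKernel b a) (Ioi 0) :=
  integrableOn_Ioi_deriv_of_nonneg' (fun t _ => hasDerivAt_kernel_primitive hb ha hab t)
    (fun t _ => logKernel_nonneg ha.le t) (tendsto_kernel_primitive hb ha hab)

/-- The hypothesis `a * b ≠ 1` keeps the partial fraction decomposition nondegenerate; the
excluded `a` form a null set. -/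
lemma integral_kernel_Ioi {b a : ℝ} (hb : 0 < b) (ha : 0 < a) (hab : a * b ≠ 1) :
    ∫ t in Ioi (0 : ℝ), logKernel b a t = Real.pi / (1 + a * b) := by
  rw [integral_Ioi_of_hasDerivAt_of_nonneg' (fun t _ => hasDerivAt_kernel_primitive hb ha hab t)
    (fun t _ => logKernel_nonneg ha.le t) (tendsto_kernel_primitive hb ha hab)]
  simp

lemma integral_kernel_unit {b : ℝ} (hb : 0 < b) (t : ℝ) :
    ∫ a in Ioc (0 : ℝ) 1, logKernel b a t = Real.log (1 + t ^ 2) / (b ^ 2 + t ^ 2) := by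
  rw [← intervalIntegral.integral_of_le zero_le_one]
  have hd : ∀ a ∈ uIcc (0 : ℝ) 1, HasDerivAt
      (fun a => Real.log (1 + a ^ 2 * t ^ 2) / (b ^ 2 + t ^ 2)) (logKernel b a t) a := by
    intro a _
    have h4 : 1 + a ^ 2 * t ^ 2 ≠ 0 := by positivity
    have h5 : b ^ 2 + t ^ 2 ≠ 0 := by positivity
    have h := ((((hasDerivAt_id a).pow 2).mul_const (t ^ 2)).const_add 1).log h4
    refine (h.div_const (b ^ 2 + t ^ 2)).congr_deriv ?_
    simp [logKernel]
    field_simp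
  rw [intervalIntegral.integral_eq_sub_of_hasDerivAt hd]
  · simp
  · apply Continuous.intervalIntegrable
    unfold logKernel
    refine Continuous.div (by fun_prop) (by fun_prop) fun a => ?_
    positivity

lemma integral_pi_div {b : ℝ} (hb : 0 < b) :
    IntegrableOn (fun a => Real.pi / (1 + a * b)) (Ioc (0 : ℝ) 1) ∧
    ∫ a in Ioc (0 : ℝ) 1, Real.pi / (1 + a * b) = Real.pi / b * Real.log (1 + b) := by
  have hpos : ∀ a ∈ uIcc (0 : ℝ) 1, 1 + a * b ≠ 0 := by
    intro a ha
    rw [uIcc_of_le zero_le_one] at ha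
    have := mul_nonneg ha.1 hb.le
    positivity
  have hi : IntervalIntegrable (fun a => Real.pi / (1 + a * b)) volume 0 1 := by
    apply ContinuousOn.intervalIntegrable
    exact ContinuousOn.div (by fun_prop) (by fun_prop) hpos
  refine ⟨(intervalIntegrable_iff_integrableOn_Ioc_of_le zero_le_one).1 hi, ?_⟩
  rw [← intervalIntegral.integral_of_le zero_le_one]
  have hd : ∀ a ∈ uIcc (0 : ℝ) 1, HasDerivAt
      (fun a => Real.pi / b * Real.log (1 + a * b)) (Real.pi / (1 + a * b)) a := by
    intro a ha
    have h4 := hpos a ha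
    have h := (((hasDerivAt_id a).mul_const b).const_add 1).log h4
    refine (h.const_mul (Real.pi / b)).congr_deriv ?_
    simp
    field_simp
  rw [intervalIntegral.integral_eq_sub_of_hasDerivAt hd hi]
  simp

lemma integral_log_div {b : ℝ} (hb : 0 < b) :
    ∫ t in Ioi (0 : ℝ), Real.log (1 + t ^ 2) / (b ^ 2 + t ^ 2) =
      Real.pi / b * Real.log (1 + b) := by
  have hae : ∀ᵐ a ∂(volume.restrict (Ioc (0 : ℝ) 1)), 0 < a ∧ a * b ≠ 1 := by
    have h1 : ∀ᵐ a ∂(volume.restrict (Ioc (0 : ℝ) 1)), a ≠ 1 / b :=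
      Measure.ae_ne _ _
    filter_upwards [h1, ae_restrict_mem measurableSet_Ioc] with a ha1 ha2
    exact ⟨ha2.1, fun h => ha1 (by field_simp; exact h)⟩
  have hint : Integrable (Function.uncurry (logKernel b))
      ((volume.restrict (Ioc (0 : ℝ) 1)).prod (volume.restrict (Ioi (0 : ℝ)))) := by
    have hm : Measurable (Function.uncurry (logKernel b)) := by
      unfold logKernel Function.uncurry
      fun_prop
    rw [integrable_prod_iff hm.aestronglyMeasurable]
    constructor
    · filter_upwards [hae] with a ha
      exact integrableOn_kernel_Ioi hb ha.1 ha.2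
    · refine (integral_pi_div hb).1.congr ?_
      filter_upwards [hae] with a ha
      rw [← integral_kernel_Ioi hb ha.1 ha.2]
      refine integral_congr_ae (ae_of_all _ fun t => ?_)
      exact (Real.norm_of_nonneg (logKernel_nonneg ha.1.le t)).symm
  have hswap := integral_integral_swap hint
  simp_rw [integral_kernel_unit hb] at hswap
  rw [← hswap, ← (integral_pi_div hb).2]
  refine integral_congr_ae ?_
  filter_upwards [hae] with a ha
  exact integral_kernel_Ioi hb ha.1 ha.2

lemma image_subst : (fun t : ℝ => t ^ 2 / (1 + t ^ 2)) '' Ioi 0 = Ioo 0 1 := by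
  ext y
  constructor
  · rintro ⟨t, ht, rfl⟩
    have ht : 0 < t := ht
    refine ⟨by positivity, ?_⟩
    simp only
    rw [div_lt_one (by positivity)]
    linarith
  · rintro ⟨h0, h1⟩
    have h2 : 0 < 1 - y := by linarith
    refine ⟨Real.sqrt (y / (1 - y)), Real.sqrt_pos.2 (by positivity), ?_⟩
    simp only
    rw [Real.sq_sqrt (by positivity)]
    field_simp
    ring

lemma injOn_subst : InjOn (fun t : ℝ => t ^ 2 / (1 + t ^ 2)) (Ioi 0) := by
  intro s hs t ht h
  have hs : 0 < s := hs
  have ht : 0 < t := ht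
  simp only at h
  rw [div_eq_div_iff (by positivity) (by positivity)] at h
  have : s ^ 2 = t ^ 2 := by linarith
  exact (pow_left_inj₀ hs.le ht.le two_ne_zero).1 this

lemma integral_subst :
    (∫ y in (0 : ℝ)..1, Real.log (1 - y) / (Real.sqrt (y * (1 - y)) * (y - 2))) =
      ∫ t in Ioi (0 : ℝ), 2 * (Real.log (1 + t ^ 2) / (2 + t ^ 2)) := by
  rw [intervalIntegral.integral_of_le zero_le_one, integral_Ioc_eq_integral_Ioo, ← image_subst]
  have hd : ∀ t ∈ Ioi (0 : ℝ), HasDerivWithinAt (fun t : ℝ => t ^ 2 / (1 + t ^ 2))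
      (2 * t / (1 + t ^ 2) ^ 2) (Ioi 0) t := by
    intro t _
    have h4 : 1 + t ^ 2 ≠ 0 := by positivity
    have hp := (hasDerivAt_id t).pow 2
    refine ((hp.div (hp.const_add 1) h4).congr_deriv ?_).hasDerivWithinAt
    simp
    field_simp
    ring
  rw [integral_image_eq_integral_abs_deriv_smul measurableSet_Ioi hd injOn_subst]
  refine setIntegral_congr_fun measurableSet_Ioi fun t ht => ?_
  have ht : 0 < t := ht
  have e1 : 1 - t ^ 2 / (1 + t ^ 2) = (1 + t ^ 2)⁻¹ := by field_simp; ring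
  have e2 : t ^ 2 / (1 + t ^ 2) * (1 + t ^ 2)⁻¹ = (t / (1 + t ^ 2)) ^ 2 := by field_simp
  have e3 : t ^ 2 / (1 + t ^ 2) - 2 = -((2 + t ^ 2) / (1 + t ^ 2)) := by field_simp; ring
  simp only [smul_eq_mul]
  rw [e1, e2, e3, Real.sqrt_sq (by positivity), Real.log_inv, abs_of_nonneg (by positivity)]
  field_simp

/-- `(√2/4π) ∫_0^1 ln(1-y)/(√(y(1-y))(y-2)) dy = ln(1+√2)/2`. -/
theorem log_integral_y_minus_two :
    (Real.sqrt 2 / (4 * Real.pi)) *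
      (∫ y in (0 : ℝ)..1, Real.log (1 - y) / (Real.sqrt (y * (1 - y)) * (y - 2))) =
    Real.log (1 + Real.sqrt 2) / 2 := by
  have h := integral_log_div (b := Real.sqrt 2) (by positivity)
  rw [Real.sq_sqrt (by norm_num)] at h
  rw [integral_subst, integral_const_mul, h]
  have := Real.pi_pos
  field_simp
  norm_num
end

section
/- The improper integral −(√2 / 4π) ∫_0^1 ln(1−y) / ( √(y(1−y)) · (y + 1) ) dy equals ln(1+√2)/2 − (ln 2)/4. -/
/-!
The substitution `y = sin² φ / (1 + cos² φ)` maps `(0, π/2)` bijectively onto `(0, 1)`. There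
`1 - y = 2 cos² φ / (1 + cos² φ)`, `1 + y = 2 / (1 + cos² φ)` and
`dy = 4 sin φ cos φ / (1 + cos² φ)² dφ`, so all algebraic factors cancel and the integral becomes
`√2 ∫_0^{π/2} log (2 cos² φ / (1 + cos² φ)) dφ`.

The part `∫ log (cos φ)` is the classical `-(π/2) log 2`. For the rest, `1 + cos² φ =
(3 + cos 2φ) / 2`, and `3 + cos θ` is, up to the factor `2A`, the squared distance from `e^{iθ}` to
`-A` with `A = 3 + 2√2`; Jensen's formula gives the circle average of the logarithm of that
distance as `log A`.
-/

open Real MeasureTheory Set in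
/-- The algebraic singularities of the integrand cancel under
`y = sin² φ / (1 + cos² φ)`. No integrability has to be checked: the change of variables formula
for an injective differentiable map holds for arbitrary functions. -/
lemma integral_eq_trig :
    (∫ y in (0 : ℝ)..1, log (1 - y) / (√(y * (1 - y)) * (y + 1))) =
      √2 * ∫ φ in (0 : ℝ)..(π / 2), (log 2 + 2 * log (cos φ) - log (1 + cos φ ^ 2)) := by
  have hpi := pi_pos
  set f : ℝ → ℝ := fun φ => sin φ ^ 2 / (1 + cos φ ^ 2) with hf
  set f' : ℝ → ℝ := fun φ => 4 * sin φ * cos φ / (1 + cos φ ^ 2) ^ 2 with hf'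
  have hpos : ∀ φ, 0 < 1 + cos φ ^ 2 := fun φ => by positivity
  have hder : ∀ φ ∈ Ioo 0 (π / 2), HasDerivWithinAt f (f' φ) (Ioo 0 (π / 2)) φ := by
    intro φ _
    have h := (((hasDerivAt_sin φ).pow 2).div (((hasDerivAt_cos φ).pow 2).const_add 1)
      (hpos φ).ne').hasDerivWithinAt (s := Ioo 0 (π / 2))
    refine HasDerivWithinAt.congr_deriv (f := f) h ?_
    have := sin_sq_add_cos_sq φ
    simp only [hf', Pi.pow_apply]
    congr 1
    push_cast
    linear_combination (2 * sin φ * cos φ) * this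
  have hinj : InjOn f (Ioo 0 (π / 2)) := by
    intro a ha b hb hab
    have hab' : sin a ^ 2 / (1 + cos a ^ 2) = sin b ^ 2 / (1 + cos b ^ 2) := hab
    rw [div_eq_div_iff (hpos a).ne' (hpos b).ne', sin_sq, sin_sq] at hab'
    have hca : 0 < cos a := cos_pos_of_mem_Ioo ⟨by linarith [ha.1], ha.2⟩
    have hcb : 0 < cos b := cos_pos_of_mem_Ioo ⟨by linarith [hb.1], hb.2⟩
    have hsq : cos a ^ 2 = cos b ^ 2 := by linarith
    have hc : cos a = cos b := by
      rwa [sq_eq_sq₀ hca.le hcb.le] at hsq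
    exact injOn_cos ⟨ha.1.le, by linarith [ha.2]⟩ ⟨hb.1.le, by linarith [hb.2]⟩ hc
  have himg : f '' Ioo 0 (π / 2) = Ioo 0 1 := by
    apply Subset.antisymm
    · rintro _ ⟨φ, hφ, rfl⟩
      have hs : 0 < sin φ := sin_pos_of_pos_of_lt_pi hφ.1 (by linarith [hφ.2])
      have hc : 0 < cos φ := cos_pos_of_mem_Ioo ⟨by linarith [hφ.1], hφ.2⟩
      have := sin_sq_add_cos_sq φ
      refine ⟨by simp only [hf]; positivity, ?_⟩
      simp only [hf]
      rw [div_lt_one (hpos φ)]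
      nlinarith
    · have hcont : ContinuousOn f (Icc 0 (π / 2)) := by
        apply Continuous.continuousOn
        exact (continuous_sin.pow 2).div (by fun_prop) (fun φ => (hpos φ).ne')
      have := intermediate_value_Ioo (by positivity : (0 : ℝ) ≤ π / 2) hcont
      simpa [hf] using this
  rw [intervalIntegral.integral_of_le zero_le_one, integral_Ioc_eq_integral_Ioo, ← himg,
    integral_image_eq_integral_abs_deriv_smul measurableSet_Ioo hder hinj,
    intervalIntegral.integral_of_le (by positivity), integral_Ioc_eq_integral_Ioo,
    ← integral_const_mul]
  refine setIntegral_congr_fun measurableSet_Ioo fun φ hφ => ?_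
  have hs : 0 < sin φ := sin_pos_of_pos_of_lt_pi hφ.1 (by linarith [hφ.2])
  have hc : 0 < cos φ := cos_pos_of_mem_Ioo ⟨by linarith [hφ.1], hφ.2⟩
  have hp := hpos φ
  have h1 : 1 - f φ = 2 * cos φ ^ 2 / (1 + cos φ ^ 2) := by
    simp only [hf]
    rw [sin_sq]
    field_simp
    ring
  have h2 : f φ + 1 = 2 / (1 + cos φ ^ 2) := by
    simp only [hf]
    rw [sin_sq]
    field_simp
    ring
  have h3 : √(f φ * (1 - f φ)) = √2 * (sin φ * cos φ / (1 + cos φ ^ 2)) := by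
    rw [h1, show f φ * (2 * cos φ ^ 2 / (1 + cos φ ^ 2)) =
      2 * (sin φ * cos φ / (1 + cos φ ^ 2)) ^ 2 by simp only [hf]; field_simp,
      sqrt_mul (by norm_num), sqrt_sq (by positivity)]
  have h4 : log (1 - f φ) = log 2 + 2 * log (cos φ) - log (1 + cos φ ^ 2) := by
    rw [h1, log_div (by positivity) hp.ne', log_mul (by norm_num) (by positivity), log_pow]
    norm_num
  have h5 : |f' φ| = 4 * sin φ * cos φ / (1 + cos φ ^ 2) ^ 2 := abs_of_pos (by positivity)
  simp only [smul_eq_mul]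
  rw [h5, h4, h3, h2]
  have h6 : √2 ^ 2 = 2 := sq_sqrt (by norm_num)
  field_simp
  rw [h6]
  ring

open Real MeasureTheory Set in
/-- Jensen's formula for `z + A` on the unit circle, where `A = 3 + 2√2` is chosen so that
`|e^{iθ} + A|² = 2A (3 + cos θ)`. -/
lemma integral_log_three_add_cos :
    ∫ θ in (0 : ℝ)..(2 * π), log (3 + cos θ) = 2 * π * log ((3 + 2 * √2) / 2) := by
  have h6 : √2 ^ 2 = 2 := sq_sqrt (by norm_num)
  set A : ℝ := 3 + 2 * √2 with hA
  have hA1 : 1 < A := by have := sqrt_nonneg 2; linarith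
  have hA2 : A ^ 2 + 1 = 6 * A := by rw [hA]; linear_combination 4 * h6
  have key := circleAverage_log_norm_add_const_eq_posLog (a := (A : ℂ))
  have hpt : ∀ θ : ℝ, log ‖circleMap 0 1 θ + (A : ℂ)‖ = (log (2 * A) + log (3 + cos θ)) / 2 := by
    intro θ
    have hc := neg_one_le_cos θ
    have hn : ‖circleMap 0 1 θ + (A : ℂ)‖ ^ 2 = 2 * A * (3 + cos θ) := by
      rw [← Complex.normSq_eq_norm_sq, Complex.normSq_apply]
      simp [circleMap, Complex.exp_ofReal_mul_I_re, Complex.exp_ofReal_mul_I_im]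
      linear_combination sin_sq_add_cos_sq θ + hA2
    have := congrArg log hn
    rw [log_pow, log_mul (by positivity) (by linarith)] at this
    push_cast at this
    linarith
  rw [circleAverage_def, Real.posLog_eq_log (by simpa using hA1.le.trans (le_abs_self A))] at key
  simp only [hpt, smul_eq_mul] at key
  have hint : IntervalIntegrable (fun θ => log (3 + cos θ)) volume 0 (2 * π) := by
    apply Continuous.intervalIntegrable
    exact Continuous.log (by fun_prop) (fun θ => by linarith [neg_one_le_cos θ])
  rw [intervalIntegral.integral_div, intervalIntegral.integral_add (by simp) hint,
    intervalIntegral.integral_const, log_mul (by norm_num) (by positivity)] at key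
  have hAn : ‖(A : ℂ)‖ = A := by simp; linarith
  rw [hAn] at key
  rw [log_div (by positivity) (by norm_num)]
  have hpi := pi_pos
  simp only [smul_eq_mul] at key
  field_simp at key
  linarith

open Real MeasureTheory Set in
lemma integral_log_one_add_cos_sq :
    ∫ φ in (0 : ℝ)..(π / 2), log (1 + cos φ ^ 2) = π / 2 * log ((3 + 2 * √2) / 4) := by
  have hcont : Continuous fun θ => log (3 + cos θ) :=
    Continuous.log (by fun_prop) (fun θ => by linarith [neg_one_le_cos θ])
  have hhalf : ∫ θ in (0 : ℝ)..π, log (3 + cos θ) = π * log ((3 + 2 * √2) / 2) := by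
    have hrefl : ∫ θ in π..(2 * π), log (3 + cos θ) = ∫ θ in (0 : ℝ)..π, log (3 + cos θ) := by
      have := intervalIntegral.integral_comp_sub_left (a := 0) (b := π)
        (fun θ => log (3 + cos θ)) (2 * π)
      simp only [cos_two_pi_sub] at this
      rw [this]
      congr 1 <;> ring
    have hadd := intervalIntegral.integral_add_adjacent_intervals
      (hcont.intervalIntegrable (μ := volume) 0 π) (hcont.intervalIntegrable π (2 * π))
    rw [hrefl, integral_log_three_add_cos] at hadd
    linarith
  have hpt : ∀ φ : ℝ, log (1 + cos φ ^ 2) = log (3 + cos (2 * φ)) - log 2 := by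
    intro φ
    rw [← log_div (by linarith [neg_one_le_cos (2 * φ)]) (by norm_num), cos_two_mul]
    congr 1
    ring
  have hcomp := intervalIntegral.integral_comp_mul_left (a := 0) (b := π / 2)
    (fun θ => log (3 + cos θ)) (two_ne_zero' ℝ)
  simp only [mul_zero, mul_div_cancel₀ π (two_ne_zero' ℝ), smul_eq_mul, hhalf] at hcomp
  have hcont2 : Continuous fun φ : ℝ => log (3 + cos (2 * φ)) :=
    hcont.comp (continuous_const_mul 2)
  simp only [hpt]
  rw [intervalIntegral.integral_sub (hcont2.intervalIntegrable _ _) (by simp), hcomp,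
    intervalIntegral.integral_const, show (3 + 2 * √2) / 4 = (3 + 2 * √2) / 2 / 2 by ring,
    log_div (x := (3 + 2 * √2) / 2) (by positivity) (by norm_num), smul_eq_mul]
  ring

open Real in
lemma integral_log_cos_zero_pi_div_two :
    ∫ φ in (0 : ℝ)..(π / 2), log (cos φ) = -log 2 * π / 2 := by
  have := intervalIntegral.integral_comp_sub_left (a := 0) (b := π / 2)
    (fun θ => log (sin θ)) (π / 2)
  simp only [sin_pi_div_two_sub, sub_self, sub_zero] at this
  rw [this, integral_log_sin_zero_pi_div_two]

/-- `-(√2/4π) ∫_0^1 ln(1-y)/(√(y(1-y))(y+1)) dy = ln(1+√2)/2 - (ln 2)/4`. -/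
theorem log_integral_y_plus_one :
    -(Real.sqrt 2 / (4 * Real.pi)) *
      (∫ y in (0 : ℝ)..1, Real.log (1 - y) / (Real.sqrt (y * (1 - y)) * (y + 1))) =
    Real.log (1 + Real.sqrt 2) / 2 - Real.log 2 / 4 := by
  have hcos : IntervalIntegrable (fun φ => Real.log (Real.cos φ)) MeasureTheory.volume
      0 (Real.pi / 2) := intervalIntegrable_log_cos
  have hone : IntervalIntegrable (fun φ => Real.log (1 + Real.cos φ ^ 2)) MeasureTheory.volume
      0 (Real.pi / 2) := by
    apply Continuous.intervalIntegrable
    exact Continuous.log (by fun_prop) (fun φ => by positivity)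
  have h6 : Real.sqrt 2 ^ 2 = 2 := Real.sq_sqrt (by norm_num)
  have hlog : Real.log ((3 + 2 * Real.sqrt 2) / 4) =
      2 * Real.log (1 + Real.sqrt 2) - 2 * Real.log 2 := by
    rw [show (3 + 2 * Real.sqrt 2) / 4 = ((1 + Real.sqrt 2) / 2) ^ 2 by
      linear_combination (-1 / 4 : ℝ) * h6, Real.log_pow,
      Real.log_div (by positivity) (by norm_num)]
    push_cast
    ring
  rw [integral_eq_trig, intervalIntegral.integral_sub
    ((intervalIntegrable_const).add (hcos.const_mul 2)) hone,
    intervalIntegral.integral_add intervalIntegrable_const (hcos.const_mul 2),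
    intervalIntegral.integral_const_mul, intervalIntegral.integral_const,
    integral_log_cos_zero_pi_div_two, integral_log_one_add_cos_sq, hlog, smul_eq_mul]
  have hpi := Real.pi_pos
  field_simp
  rw [h6]
  ring
end

section
/- For every real t < −1, ∫_0^1 ln(1−x) / ( (x + t) √(x(1−x)) ) dx = −π · ln( (−t−1) / (√(−t) + √(−t−1))² ) / √(t(t+1)). -/
/-!
Put `s = -t > 1`. The substitution `x = u² / (1 + u²)` maps `(0, ∞)` onto `(0, 1)`, with
`1 - x = 1 / (1 + u²)` and `dx / √(x (1 - x)) = 2 du / (1 + u²)`, and turns the integral into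
`2 / (s - 1) * ∫_0^∞ log (1 + u²) / (b² + u²) du` where `b = √s / √(s - 1)`.

The remaining integral equals `π / b * log (1 + b)` (`integral_log_one_add_sq_div`): write
`log (1 + u²) = ∫_0^1 2 a u² / (1 + a² u²) da`, exchange the two integrals (the integrand is
nonnegative, so Tonelli applies), evaluate the `u`-integral by partial fractions as `π / (1 + a b)`,
and integrate over `a`. The partial fractions degenerate only at `a = 1 / b`, a null set.
-/

open MeasureTheory Set Filter Topology

/-- Antiderivative in `u` of `2 a u² / ((1 + a² u²) (b² + u²))`, by partial fractions. -/
lemma hasDerivAt_partialFractions {a b : ℝ} (ha : 0 < a) (hb : 0 < b) (hab : a * b ≠ 1) (u : ℝ) :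
    HasDerivAt (fun u : ℝ => 2 / (a ^ 2 * b ^ 2 - 1) *
        (a * b * Real.arctan (u / b) - Real.arctan (a * u)))
      (2 * a * u ^ 2 / (1 + a ^ 2 * u ^ 2) / (b ^ 2 + u ^ 2)) u := by
  have hd : a ^ 2 * b ^ 2 - 1 ≠ 0 := by
    intro h
    have h2 : (a * b - 1) * (a * b + 1) = 0 := by linarith
    rcases mul_eq_zero.1 h2 with h3 | h3
    · exact hab (by linarith)
    · have := mul_pos ha hb
      linarith
  have h1 : HasDerivAt (fun u : ℝ => Real.arctan (u / b)) (1 / (1 + (u / b) ^ 2) * (1 / b)) u :=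
    ((hasDerivAt_id u).div_const b).arctan
  have h2 : HasDerivAt (fun u : ℝ => Real.arctan (a * u)) (1 / (1 + (a * u) ^ 2) * (a * 1)) u :=
    ((hasDerivAt_id u).const_mul a).arctan
  refine (((h1.const_mul (a * b)).sub h2).const_mul (2 / (a ^ 2 * b ^ 2 - 1))).congr_deriv ?_
  have e1 : 1 + a ^ 2 * u ^ 2 ≠ 0 := by positivity
  have e2 : b ^ 2 + u ^ 2 ≠ 0 := by positivity
  have e3 : 1 + (a * u) ^ 2 ≠ 0 := by positivity
  have e4 : 1 + (u / b) ^ 2 = (b ^ 2 + u ^ 2) / b ^ 2 := by field_simp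
  rw [e4, mul_pow]
  field_simp
  ring

lemma lintegral_partialFractions {a b : ℝ} (ha : 0 < a) (hb : 0 < b) (hab : a * b ≠ 1) :
    ∫⁻ u in Ioi (0 : ℝ),
        ENNReal.ofReal (2 * a * u ^ 2 / (1 + a ^ 2 * u ^ 2) / (b ^ 2 + u ^ 2)) =
      ENNReal.ofReal (Real.pi / (1 + a * b)) := by
  have hpos : ∀ u : ℝ, 0 ≤ 2 * a * u ^ 2 / (1 + a ^ 2 * u ^ 2) / (b ^ 2 + u ^ 2) := by
    intro u; positivity
  have hlim : Tendsto (fun u : ℝ => 2 / (a ^ 2 * b ^ 2 - 1) *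
        (a * b * Real.arctan (u / b) - Real.arctan (a * u))) atTop
      (𝓝 (2 / (a ^ 2 * b ^ 2 - 1) * (a * b * (Real.pi / 2) - Real.pi / 2))) := by
    have hA := Real.tendsto_arctan_atTop.mono_right nhdsWithin_le_nhds
    exact (((hA.comp (tendsto_id.atTop_div_const hb)).const_mul (a * b)).sub
      (hA.comp (tendsto_id.const_mul_atTop ha))).const_mul _
  have hint := integrableOn_Ioi_deriv_of_nonneg'
    (fun x _ => hasDerivAt_partialFractions ha hb hab x) (fun x _ => hpos x) hlim (a := 0)
  have hval := integral_Ioi_of_hasDerivAt_of_nonneg'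
    (fun x _ => hasDerivAt_partialFractions ha hb hab x) (fun x _ => hpos x) hlim (a := 0)
  rw [← ofReal_integral_eq_lintegral_ofReal hint (ae_of_all _ hpos), hval]
  congr 1
  have h1 : a * b - 1 ≠ 0 := sub_ne_zero.2 hab
  have h2 : 1 + a * b ≠ 0 := by positivity
  have h3 : a ^ 2 * b ^ 2 - 1 = (a * b - 1) * (1 + a * b) := by ring
  rw [h3]
  simp only [zero_div, mul_zero, Real.arctan_zero, sub_zero]
  field_simp

lemma lintegral_log_param {b u : ℝ} (hb : 0 < b) :
    ∫⁻ a in Ioc (0 : ℝ) 1,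
        ENNReal.ofReal (2 * a * u ^ 2 / (1 + a ^ 2 * u ^ 2) / (b ^ 2 + u ^ 2)) =
      ENNReal.ofReal (Real.log (1 + u ^ 2) / (b ^ 2 + u ^ 2)) := by
  have hne : ∀ a : ℝ, 1 + a ^ 2 * u ^ 2 ≠ 0 := fun a => by positivity
  have hne2 : b ^ 2 + u ^ 2 ≠ 0 := by positivity
  have hcont : Continuous
      (fun a : ℝ => 2 * a * u ^ 2 / (1 + a ^ 2 * u ^ 2) / (b ^ 2 + u ^ 2)) := by
    fun_prop (disch := first | exact hne _ | exact hne2)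
  have hd : ∀ a ∈ uIcc (0 : ℝ) 1,
      HasDerivAt (fun a : ℝ => Real.log (1 + a ^ 2 * u ^ 2) / (b ^ 2 + u ^ 2))
        (2 * a * u ^ 2 / (1 + a ^ 2 * u ^ 2) / (b ^ 2 + u ^ 2)) a := by
    intro a _
    have h := ((((hasDerivAt_pow 2 a).mul_const (u ^ 2)).const_add 1).log (hne a)).div_const
      (b ^ 2 + u ^ 2)
    simpa using h
  rw [← ofReal_integral_eq_lintegral_ofReal, ← intervalIntegral.integral_of_le zero_le_one,
    intervalIntegral.integral_eq_sub_of_hasDerivAt hd (hcont.intervalIntegrable _ _)]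
  · simp
  · exact (intervalIntegrable_iff_integrableOn_Ioc_of_le zero_le_one).1
      (hcont.intervalIntegrable _ _)
  · filter_upwards [ae_restrict_mem measurableSet_Ioc] with a ha
    have := ha.1
    positivity

lemma lintegral_pi_div {b : ℝ} (hb : 0 < b) :
    ∫⁻ a in Ioc (0 : ℝ) 1, ENNReal.ofReal (Real.pi / (1 + a * b)) =
      ENNReal.ofReal (Real.pi / b * Real.log (1 + b)) := by
  have hpos : ∀ a ∈ uIcc (0 : ℝ) 1, 0 < 1 + a * b := by
    intro a ha
    rw [uIcc_of_le zero_le_one] at ha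
    have := mul_nonneg ha.1 hb.le
    linarith
  have hd : ∀ a ∈ uIcc (0 : ℝ) 1,
      HasDerivAt (fun a : ℝ => Real.pi / b * Real.log (1 + a * b)) (Real.pi / (1 + a * b)) a := by
    intro a ha
    have h0 := hpos a ha
    refine (((((hasDerivAt_id a).mul_const b).const_add 1).log h0.ne').const_mul
      (Real.pi / b)).congr_deriv ?_
    simp only [id]
    field_simp
  have hi : IntervalIntegrable (fun a : ℝ => Real.pi / (1 + a * b)) volume 0 1 := by
    apply ContinuousOn.intervalIntegrable
    exact ContinuousOn.div (by fun_prop) (by fun_prop) fun a ha => (hpos a ha).ne'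
  rw [← ofReal_integral_eq_lintegral_ofReal, ← intervalIntegral.integral_of_le zero_le_one,
    intervalIntegral.integral_eq_sub_of_hasDerivAt hd hi]
  · simp
  · exact (intervalIntegrable_iff_integrableOn_Ioc_of_le zero_le_one).1 hi
  · filter_upwards [ae_restrict_mem measurableSet_Ioc] with a ha
    have := ha.1
    positivity

lemma integral_log_one_add_sq_div {b : ℝ} (hb : 0 < b) :
    ∫ u in Ioi (0 : ℝ), Real.log (1 + u ^ 2) / (b ^ 2 + u ^ 2) =
      Real.pi / b * Real.log (1 + b) := by
  have hlog : ∀ u : ℝ, 0 ≤ Real.log (1 + u ^ 2) := fun u =>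
    Real.log_nonneg (by nlinarith [sq_nonneg u])
  rw [integral_eq_lintegral_of_nonneg_ae]
  · have key : ∫⁻ u in Ioi (0 : ℝ), ENNReal.ofReal (Real.log (1 + u ^ 2) / (b ^ 2 + u ^ 2)) =
        ENNReal.ofReal (Real.pi / b * Real.log (1 + b)) := by
      simp_rw [← lintegral_log_param hb]
      rw [lintegral_lintegral_swap, ← lintegral_pi_div hb]
      · apply lintegral_congr_ae
        have hn : ∀ᵐ a ∂(volume.restrict (Ioc (0 : ℝ) 1)), a ≠ b⁻¹ :=
          ae_restrict_of_ae (Measure.ae_ne volume b⁻¹)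
        filter_upwards [ae_restrict_mem measurableSet_Ioc, hn] with a ha hab
        exact lintegral_partialFractions ha.1 hb fun h => hab (eq_inv_of_mul_eq_one_left h)
      · apply Measurable.aemeasurable
        simp only [Function.uncurry_def]
        fun_prop
    rw [key, ENNReal.toReal_ofReal]
    have := Real.log_nonneg (show 1 ≤ 1 + b by linarith)
    positivity
  · exact ae_of_all _ fun u => div_nonneg (hlog u) (by positivity)
  · apply Measurable.aestronglyMeasurable
    fun_prop

lemma image_sq_div_one_add_sq :
    (fun u : ℝ => u ^ 2 / (1 + u ^ 2)) '' Ioi 0 = Ioo 0 1 := by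
  ext x
  constructor
  · rintro ⟨u, hu, rfl⟩
    have hu : 0 < u := hu
    refine ⟨by positivity, ?_⟩
    rw [div_lt_one (by positivity)]
    linarith
  · rintro ⟨h0, h1⟩
    have h2 : 0 < 1 - x := by linarith
    refine ⟨Real.sqrt (x / (1 - x)), Real.sqrt_pos.2 (by positivity), ?_⟩
    simp only
    rw [Real.sq_sqrt (by positivity)]
    field_simp
    ring

lemma injOn_sq_div_one_add_sq : InjOn (fun u : ℝ => u ^ 2 / (1 + u ^ 2)) (Ioi 0) := by
  intro u hu v hv h
  have hu : 0 < u := hu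
  have hv : 0 < v := hv
  simp only at h
  rw [div_eq_div_iff (by positivity) (by positivity)] at h
  exact (pow_left_inj₀ hu.le hv.le two_ne_zero).1 (by linarith)

theorem integral_log_shifted_sqrt_neg (t : ℝ) (ht : t < -1) :
    (∫ x in (0 : ℝ)..1, Real.log (1 - x) / ((x + t) * Real.sqrt (x * (1 - x)))) =
      -Real.pi * Real.log ((-t - 1) / (Real.sqrt (-t) + Real.sqrt (-t - 1)) ^ 2) /
        Real.sqrt (t * (t + 1)) := by
  obtain ⟨p, hp, hpt⟩ : ∃ p : ℝ, 0 < p ∧ p ^ 2 = -t :=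
    ⟨Real.sqrt (-t), Real.sqrt_pos.2 (by linarith), Real.sq_sqrt (by linarith)⟩
  obtain ⟨q, hq, hqt⟩ : ∃ q : ℝ, 0 < q ∧ q ^ 2 = -t - 1 :=
    ⟨Real.sqrt (-t - 1), Real.sqrt_pos.2 (by linarith), Real.sq_sqrt (by linarith)⟩
  have hpq : t * (t + 1) = (p * q) ^ 2 := by rw [mul_pow, hpt, hqt]; ring
  rw [hpq, Real.sqrt_sq (by positivity), ← hqt, ← hpt, Real.sqrt_sq hp.le, Real.sqrt_sq hq.le,
    intervalIntegral.integral_of_le zero_le_one, integral_Ioc_eq_integral_Ioo,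
    ← image_sq_div_one_add_sq,
    integral_image_eq_integral_abs_deriv_smul (f' := fun u : ℝ => 2 * u / (1 + u ^ 2) ^ 2)
      measurableSet_Ioi _ injOn_sq_div_one_add_sq]
  · have hcongr : ∀ u ∈ Ioi (0 : ℝ),
        |2 * u / (1 + u ^ 2) ^ 2| • (Real.log (1 - u ^ 2 / (1 + u ^ 2)) /
          ((u ^ 2 / (1 + u ^ 2) + t) *
            Real.sqrt (u ^ 2 / (1 + u ^ 2) * (1 - u ^ 2 / (1 + u ^ 2))))) =
        2 / q ^ 2 * (Real.log (1 + u ^ 2) / ((p / q) ^ 2 + u ^ 2)) := by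
      intro u hu
      have hu : 0 < u := hu
      have e1 : 1 - u ^ 2 / (1 + u ^ 2) = (1 + u ^ 2)⁻¹ := by field_simp; ring
      have e2 : u ^ 2 / (1 + u ^ 2) * (1 + u ^ 2)⁻¹ = (u / (1 + u ^ 2)) ^ 2 := by field_simp
      have e3 : u ^ 2 / (1 + u ^ 2) + t = -((p ^ 2 + q ^ 2 * u ^ 2) / (1 + u ^ 2)) := by
        rw [hpt, hqt]; field_simp; ring
      have e4 : (p / q) ^ 2 + u ^ 2 = (p ^ 2 + q ^ 2 * u ^ 2) / q ^ 2 := by field_simp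
      rw [e1, e2, Real.sqrt_sq (by positivity), Real.log_inv, e3, e4,
        abs_of_pos (by positivity), smul_eq_mul]
      field_simp
    rw [setIntegral_congr_fun measurableSet_Ioi hcongr, integral_const_mul,
      integral_log_one_add_sq_div (by positivity)]
    have e5 : q ^ 2 / (p + q) ^ 2 = ((1 + p / q) ^ 2)⁻¹ := by field_simp; ring
    rw [e5, Real.log_inv, Real.log_pow]
    push_cast
    field_simp
  · intro u _
    have hne : 1 + u ^ 2 ≠ 0 := by positivity
    refine (((hasDerivAt_pow 2 u).div ((hasDerivAt_pow 2 u).const_add 1)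
      hne).congr_deriv ?_).hasDerivWithinAt
    field_simp
    push_cast
    ring
end
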